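/- Let G be a finite group, k a field, χ a subadditive function on the finite dimensional kG-modules, and χ'(X) := Σ_{i=1}^m χ(X ⊗_k S_i) where S_1, …, S_m represent the isomorphism classes of simple kG-modules. Then χ' is tensor closed, Adloc(χ') ⊆ Adloc(χ), and for every tensor closed subadditive function χ'' with Adloc(χ'') ⊆ Adloc(χ) one has Adloc(χ'') ⊆ Adloc(χ'). In other words, χ' is, up to equivalence (equality of additive loci), the unique minimal tensor closed subadditive function χ' with χ' ≥ χ in the order defined by χ ≥ χ' iff Adloc(χ) ⊆ Adloc(χ'). -/

import Mathlib

/-- The composition length of a module (the length of a composition series,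
zero if none exists). -/
noncomputable def compLength (R : Type) [Ring R] (M : Type) [AddCommGroup M] [Module R M] : ℕ := by
  classical
  exact if h : ∃ s : CompositionSeries (Submodule R M), s.head = ⊥ ∧ s.last = ⊤ then
    h.choose.length else 0

/-- A module `M` is endofinite if it has finite composition length over its
endomorphism ring, which acts on `M` by application. -/
def IsEndofinite (A : Type) [Ring A] (M : Type) [AddCommGroup M] [Module A M] : Prop :=
  IsFiniteLength (Module.End A M) M

/-- The subadditive function `χ_M` associated to a module `M`:
`χ_M(X) = ℓ_{End_A(M)} Hom_A(X, M)`, where `End_A(M)` acts by postcomposition. -/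
noncomputable def chiMod (A : Type) [Ring A] (M : Type) [AddCommGroup M] [Module A M]
    (X : Type) [AddCommGroup X] [Module A X] : ℕ :=
  compLength (Module.End A M) (X →ₗ[A] M)

/-- A subadditive function on the finite dimensional (i.e. finitely generated)
modules over a finite dimensional algebra `A`: it depends only on the isomorphism
class, is additive on direct sums, and satisfies `χ(X) + χ(Z) ≥ χ(Y)` for every
exact sequence `X → Y → Z → 0`. -/
def IsSubadditive (A : Type) [Ring A]
    (χ : (X : Type) → [AddCommGroup X] → [Module A X] → ℕ) : Prop :=
  (∀ (X Y : Type) [AddCommGroup X] [Module A X] [AddCommGroup Y] [Module A Y],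
      Module.Finite A X → Module.Finite A Y →
      (X ≃ₗ[A] Y) → χ X = χ Y) ∧
  (∀ (X Y : Type) [AddCommGroup X] [Module A X] [AddCommGroup Y] [Module A Y],
      Module.Finite A X → Module.Finite A Y →
      χ (X × Y) = χ X + χ Y) ∧
  (∀ (X Y Z : Type) [AddCommGroup X] [Module A X] [AddCommGroup Y] [Module A Y]
      [AddCommGroup Z] [Module A Z],
      Module.Finite A X → Module.Finite A Y → Module.Finite A Z →
      ∀ (f : X →ₗ[A] Y) (g : Y →ₗ[A] Z),
      Function.Exact f g → Function.Surjective g → χ Y ≤ χ X + χ Z)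

/-- Membership in the additive locus `Adloc(χ)`: `Z` is finite dimensional and
`χ(X) - χ(Y) + χ(Z) = 0` for every short exact sequence `0 → X → Y → Z → 0` of
finite dimensional modules. -/
def MemAdloc (A : Type) [Ring A]
    (χ : (X : Type) → [AddCommGroup X] → [Module A X] → ℕ)
    (Z : Type) [AddCommGroup Z] [Module A Z] : Prop :=
  Module.Finite A Z ∧
  ∀ (X Y : Type) [AddCommGroup X] [Module A X] [AddCommGroup Y] [Module A Y],
    Module.Finite A X → Module.Finite A Y →
    ∀ (f : X →ₗ[A] Y) (g : Y →ₗ[A] Z),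
    Function.Injective f → Function.Exact f g → Function.Surjective g →
    χ X + χ Z = χ Y

/-- The tensor product over `k` of two `kG`-modules, with the diagonal `G`-action. -/
noncomputable abbrev dtensor (k G : Type) [Field k] [Group G] (M N : Type)
    [AddCommGroup M] [Module (MonoidAlgebra k G) M]
    [AddCommGroup N] [Module (MonoidAlgebra k G) N] : Type :=
  ((Representation.ofModule (k := k) (G := G) M).tprod (Representation.ofModule N)).asModule

noncomputable instance dtensorAddCommGroup (k G : Type) [Field k] [Group G] (M N : Type)
    [AddCommGroup M] [Module (MonoidAlgebra k G) M]
    [AddCommGroup N] [Module (MonoidAlgebra k G) N] : AddCommGroup (dtensor k G M N) :=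
  @TensorProduct.addCommGroup k _ (RestrictScalars k (MonoidAlgebra k G) M)
    (RestrictScalars k (MonoidAlgebra k G) N)
    (instAddCommGroupRestrictScalars k (MonoidAlgebra k G) M)
    (instAddCommMonoidRestrictScalars k (MonoidAlgebra k G) N)
    (RestrictScalars.module k (MonoidAlgebra k G) M)
    (RestrictScalars.module k (MonoidAlgebra k G) N)

noncomputable instance dtensorModule (k G : Type) [Field k] [Group G] (M N : Type)
    [AddCommGroup M] [Module (MonoidAlgebra k G) M]
    [AddCommGroup N] [Module (MonoidAlgebra k G) N] :
    @Module (MonoidAlgebra k G) (dtensor k G M N) _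
      (dtensorAddCommGroup k G M N).toAddCommMonoid :=
  Representation.instModuleMonoidAlgebraAsModule
    ((Representation.ofModule (k := k) (G := G) M).tprod (Representation.ofModule N))

/-- A function on `kG`-modules is tensor closed if its additive locus is closed under
tensoring (over `k`, with diagonal `G`-action) with finite dimensional modules. -/
def TensorClosed (k G : Type) [Field k] [Group G]
    (χ : (X : Type) → [AddCommGroup X] → [Module (MonoidAlgebra k G) X] → ℕ) : Prop :=
  ∀ (M N : Type) [AddCommGroup M] [Module (MonoidAlgebra k G) M]
    [AddCommGroup N] [Module (MonoidAlgebra k G) N],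
    MemAdloc (MonoidAlgebra k G) χ M → Module.Finite (MonoidAlgebra k G) N →
    MemAdloc (MonoidAlgebra k G) χ (dtensor k G M N)

section
variable (k G : Type) [Field k] [Group G] {m : ℕ}

/-- `S` is a complete set of representatives of the isomorphism classes of simple
`kG`-modules. -/
def IsCompleteSetOfSimples (S : Fin m → Type)
    [∀ i, AddCommGroup (S i)] [∀ i, Module (MonoidAlgebra k G) (S i)] : Prop :=
  (∀ i, IsSimpleModule (MonoidAlgebra k G) (S i)) ∧
  (∀ i j, i ≠ j → IsEmpty (S i ≃ₗ[MonoidAlgebra k G] S j)) ∧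
  (∀ (N : Type) (_ : AddCommGroup N) (_ : Module (MonoidAlgebra k G) N),
    IsSimpleModule (MonoidAlgebra k G) N → ∃ i, Nonempty (N ≃ₗ[MonoidAlgebra k G] S i))

end


open TensorProduct

section api
variable (k G : Type) [Field k] [Group G]

/-- synonym carrying the k-structure -/
def RS (_k _G M : Type) : Type := M

instance RSAddCommGroup (M : Type) [I : AddCommGroup M] : AddCommGroup (RS k G M) := I

noncomputable instance RSModule (M : Type) [AddCommGroup M] [Module (MonoidAlgebra k G) M] :
    Module k (RS k G M) :=
  Module.compHom M (algebraMap k (MonoidAlgebra k G))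

variable {k G} in
/-- the action -/
noncomputable def actR (M : Type) [AddCommGroup M] [Module (MonoidAlgebra k G) M] :
    Representation k G (RS k G M) :=
  Representation.ofModule (k := k) (G := G) M

variable {k G} in
theorem ofModule_act (M : Type) [AddCommGroup M] [Module (MonoidAlgebra k G) M] (g : G) (x : M) :
    actR (k := k) (G := G) M g (show RS k G M from x)
      = (show RS k G M from (MonoidAlgebra.single g (1:k) • x : M)) := rfl

variable {k G} in
theorem rs_smul (M : Type) [AddCommGroup M] [Module (MonoidAlgebra k G) M] (c : k) (x : RS k G M) :
    c • x = (show RS k G M from (algebraMap k (MonoidAlgebra k G) c • (show M from x) : M)) := rfl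

/-- restrict -/
noncomputable def resHom {M N : Type} [AddCommGroup M] [Module (MonoidAlgebra k G) M]
    [AddCommGroup N] [Module (MonoidAlgebra k G) N] (f : M →ₗ[MonoidAlgebra k G] N) :
    RS k G M →ₗ[k] RS k G N where
  toFun x := f x
  map_add' x y := f.map_add x y
  map_smul' c x := f.map_smul (algebraMap k (MonoidAlgebra k G) c) x

theorem resHom_act {M N : Type} [AddCommGroup M] [Module (MonoidAlgebra k G) M]
    [AddCommGroup N] [Module (MonoidAlgebra k G) N] (f : M →ₗ[MonoidAlgebra k G] N) (g : G)
    (x : RS k G M) :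
    resHom k G f (actR M g x) = actR N g (resHom k G f x) :=
  f.map_smul (MonoidAlgebra.single g (1:k)) x

/-- lift -/
noncomputable def liftHom {M N : Type} [AddCommGroup M] [Module (MonoidAlgebra k G) M]
    [AddCommGroup N] [Module (MonoidAlgebra k G) N] (φ : RS k G M →ₗ[k] RS k G N)
    (h : ∀ g x, φ (actR M g x) = actR N g (φ x)) :
    M →ₗ[MonoidAlgebra k G] N where
  toFun x := φ x
  map_add' x y := φ.map_add x y
  map_smul' r x := by
    induction r using MonoidAlgebra.induction_on with
    | of g => exact h g x
    | add a b ha hb =>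
      have h1 : φ (show RS k G M from (a • x + b • x : M)) =
        (show RS k G N from (a • (show N from φ x) + b • (show N from φ x) : N)) :=
        (φ.map_add _ _).trans (congrArg₂ (fun u v : N => u + v) ha hb)
      exact (congrArg φ (add_smul a b x)).trans (h1.trans (add_smul a b (show N from φ x)).symm)
    | smul c a ha =>
      have e : ∀ (L : Type) [AddCommGroup L] [Module (MonoidAlgebra k G) L] (y : L),
          (c • a) • y = algebraMap k (MonoidAlgebra k G) c • a • y := by
        intro L _ _ y
        rw [Algebra.smul_def, mul_smul]
      have h1 : φ (show RS k G M from (algebraMap k (MonoidAlgebra k G) c • a • x : M)) =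
        (show RS k G N from (algebraMap k (MonoidAlgebra k G) c • a • (show N from φ x) : N)) :=
        (φ.map_smul c _).trans
          (congrArg (fun u : N => algebraMap k (MonoidAlgebra k G) c • u) ha)
      exact (congrArg φ (e M x)).trans (h1.trans (e N (show N from φ x)).symm)

theorem resHom_liftHom {M N : Type} [AddCommGroup M] [Module (MonoidAlgebra k G) M]
    [AddCommGroup N] [Module (MonoidAlgebra k G) N] (φ : RS k G M →ₗ[k] RS k G N)
    (h : ∀ g x, φ (actR M g x) = actR N g (φ x)) :
    resHom k G (liftHom k G φ h) = φ := rfl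

/-- as -/
noncomputable def asEquiv {V : Type} [AddCommGroup V] [Module k V] (ρ : Representation k G V) :
    V ≃ₗ[k] RS k G ρ.asModule where
  toFun x := x
  invFun x := x
  left_inv _ := rfl
  right_inv _ := rfl
  map_add' _ _ := rfl
  map_smul' c x := Representation.asModuleEquiv_symm_map_smul ρ c x

theorem asEquiv_act {V : Type} [AddCommGroup V] [Module k V] (ρ : Representation k G V) (g : G)
    (x : V) : asEquiv k G ρ (ρ g x) = actR ρ.asModule g (asEquiv k G ρ x) :=
  Representation.asModuleEquiv_symm_map_rho ρ g x

/-- opaque synonym -/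
def DT (k G : Type) [Field k] [Group G] (M N : Type)
    [AddCommGroup M] [Module (MonoidAlgebra k G) M]
    [AddCommGroup N] [Module (MonoidAlgebra k G) N] : Type := dtensor k G M N

noncomputable instance DTAddCommGroup (M N : Type)
    [AddCommGroup M] [Module (MonoidAlgebra k G) M]
    [AddCommGroup N] [Module (MonoidAlgebra k G) N] : AddCommGroup (DT k G M N) :=
  dtensorAddCommGroup k G M N

noncomputable instance DTModule (M N : Type)
    [AddCommGroup M] [Module (MonoidAlgebra k G) M]
    [AddCommGroup N] [Module (MonoidAlgebra k G) N] : Module (MonoidAlgebra k G) (DT k G M N) :=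
  dtensorModule k G M N

/-- dt -/
noncomputable def dt (M N : Type) [AddCommGroup M] [Module (MonoidAlgebra k G) M]
    [AddCommGroup N] [Module (MonoidAlgebra k G) N] :
    (RS k G M ⊗[k] RS k G N) ≃ₗ[k] RS k G (DT k G M N) where
  toFun x := x
  invFun x := x
  left_inv _ := rfl
  right_inv _ := rfl
  map_add' _ _ := rfl
  map_smul' c x := Representation.asModuleEquiv_symm_map_smul
    ((Representation.ofModule (k := k) (G := G) M).tprod (Representation.ofModule N)) c x

theorem dt_act (M N : Type) [AddCommGroup M] [Module (MonoidAlgebra k G) M]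
    [AddCommGroup N] [Module (MonoidAlgebra k G) N] (g : G) (x : RS k G M ⊗[k] RS k G N) :
    actR (DT k G M N) g (dt k G M N x) =
    dt k G M N (TensorProduct.map (actR M g) (actR N g) x) :=
  (Representation.asModuleEquiv_symm_map_rho
    ((Representation.ofModule (k := k) (G := G) M).tprod (Representation.ofModule N)) g x).symm

theorem dt_symm_act (M N : Type) [AddCommGroup M] [Module (MonoidAlgebra k G) M]
    [AddCommGroup N] [Module (MonoidAlgebra k G) N] (g : G) (x : RS k G (DT k G M N)) :
    (dt k G M N).symm (actR (DT k G M N) g x) =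
    TensorProduct.map (actR M g) (actR N g)
      ((dt k G M N).symm x) := by
  obtain ⟨y, rfl⟩ := (dt k G M N).surjective x
  rw [dt_act]; simp

/-- dmap -/
noncomputable def dmap {M N M' N' : Type} [AddCommGroup M] [Module (MonoidAlgebra k G) M]
    [AddCommGroup N] [Module (MonoidAlgebra k G) N]
    [AddCommGroup M'] [Module (MonoidAlgebra k G) M']
    [AddCommGroup N'] [Module (MonoidAlgebra k G) N']
    (f : M →ₗ[MonoidAlgebra k G] M') (f' : N →ₗ[MonoidAlgebra k G] N') :
    DT k G M N →ₗ[MonoidAlgebra k G] DT k G M' N' :=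
  liftHom k G ((dt k G M' N').toLinearMap ∘ₗ TensorProduct.map (resHom k G f) (resHom k G f') ∘ₗ
    (dt k G M N).symm.toLinearMap) (by
    intro g x
    obtain ⟨y, rfl⟩ := (dt k G M N).surjective x
    simp only [LinearMap.comp_apply, LinearEquiv.coe_coe, dt_act,
      LinearEquiv.symm_apply_apply]
    congr 1
    induction y with
    | zero => simp
    | tmul a b => simp only [TensorProduct.map_tmul, resHom_act]
    | add a b ha hb => simp only [map_add, ha, hb])

theorem dmap_apply {M N M' N' : Type} [AddCommGroup M] [Module (MonoidAlgebra k G) M]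
    [AddCommGroup N] [Module (MonoidAlgebra k G) N]
    [AddCommGroup M'] [Module (MonoidAlgebra k G) M']
    [AddCommGroup N'] [Module (MonoidAlgebra k G) N']
    (f : M →ₗ[MonoidAlgebra k G] M') (f' : N →ₗ[MonoidAlgebra k G] N') (x) :
    dmap k G f f' (dt k G M N x) = dt k G M' N' (TensorProduct.map (resHom k G f) (resHom k G f') x)
    := rfl

variable {k G} in
theorem dfinite [Finite G] {M N : Type} [AddCommGroup M] [Module (MonoidAlgebra k G) M]
    [AddCommGroup N] [Module (MonoidAlgebra k G) N] (hM : Module.Finite (MonoidAlgebra k G) M)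
    (hN : Module.Finite (MonoidAlgebra k G) N) :
    Module.Finite (MonoidAlgebra k G) (DT k G M N) := by
  have key : ∀ (M : Type) [AddCommGroup M] [Module (MonoidAlgebra k G) M],
      Module.Finite (MonoidAlgebra k G) M →
        Module.Finite k (RestrictScalars k (MonoidAlgebra k G) M) := by
    intro M _ _ hM
    let := RestrictScalars.moduleOrig k (MonoidAlgebra k G) M
    have : Module.Finite (MonoidAlgebra k G) (RestrictScalars k (MonoidAlgebra k G) M) := hM
    have : Module.Finite k (MonoidAlgebra k G) := inferInstance
    exact Module.Finite.trans (MonoidAlgebra k G) _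
  have := key M hM
  have := key N hN
  exact Module.Finite.of_restrictScalars_finite k (MonoidAlgebra k G)
    ((Representation.ofModule (k := k) (G := G) M).tprod (Representation.ofModule N)).asModule

end api

section api2
variable (k G : Type) [Field k] [Group G]
variable {M N M' N' L : Type} [AddCommGroup M] [Module (MonoidAlgebra k G) M]
    [AddCommGroup N] [Module (MonoidAlgebra k G) N]
    [AddCommGroup M'] [Module (MonoidAlgebra k G) M']
    [AddCommGroup N'] [Module (MonoidAlgebra k G) N']
    [AddCommGroup L] [Module (MonoidAlgebra k G) L]

theorem resHom_id : resHom k G (LinearMap.id : N →ₗ[MonoidAlgebra k G] N) = LinearMap.id := rfl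

theorem resHom_exact {f : M →ₗ[MonoidAlgebra k G] N} {g : N →ₗ[MonoidAlgebra k G] L}
    (h : Function.Exact f g) : Function.Exact (resHom k G f) (resHom k G g) := h

theorem dmap_surj {f : M →ₗ[MonoidAlgebra k G] M'} {f' : N →ₗ[MonoidAlgebra k G] N'}
    (hf : Function.Surjective f) (hf' : Function.Surjective f') :
    Function.Surjective (dmap k G f f') := by
  intro y
  obtain ⟨y, rfl⟩ := (dt k G M' N').surjective y
  obtain ⟨x, rfl⟩ := TensorProduct.map_surjective
    (g := resHom k G f) (g' := resHom k G f') hf hf' y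
  exact ⟨dt k G M N x, rfl⟩

theorem dmap_inj {f : M →ₗ[MonoidAlgebra k G] M'} {f' : N →ₗ[MonoidAlgebra k G] N'}
    (hf : Function.Injective f) (hf' : Function.Injective f') :
    Function.Injective (dmap k G f f') := by
  have hi : Function.Injective (TensorProduct.map (resHom k G f) (resHom k G f')) :=
    TensorProduct.map_injective_of_flat_flat _ _ hf hf'
  exact (dt k G M' N').injective.comp (hi.comp (dt k G M N).symm.injective)

theorem exact_of_dt {P Q : Type} [AddCommGroup P] [Module (MonoidAlgebra k G) P]
    [AddCommGroup Q] [Module (MonoidAlgebra k G) Q]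
    {f : M →ₗ[MonoidAlgebra k G] M'} {f' : N →ₗ[MonoidAlgebra k G] N'}
    {g : M' →ₗ[MonoidAlgebra k G] P} {g' : N' →ₗ[MonoidAlgebra k G] Q}
    (h : Function.Exact (TensorProduct.map (resHom k G f) (resHom k G f'))
      (TensorProduct.map (resHom k G g) (resHom k G g'))) :
    Function.Exact (dmap k G f f') (dmap k G g g') := by
  intro y
  obtain ⟨y, rfl⟩ := (dt k G M' N').surjective y
  rw [dmap_apply]
  refine Iff.trans (Iff.trans ?_ (h y)) ?_
  · exact (dt k G P Q).map_eq_zero_iff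
  · constructor
    · rintro ⟨x, rfl⟩
      exact ⟨dt k G M N x, rfl⟩
    · rintro ⟨x, hx⟩
      obtain ⟨x, rfl⟩ := (dt k G M N).surjective x
      exact ⟨x, (dt k G M' N').injective hx⟩

theorem dmap_exact_left {f : M →ₗ[MonoidAlgebra k G] M'} {g : M' →ₗ[MonoidAlgebra k G] L}
    (h : Function.Exact f g) (hg : Function.Surjective g) :
    Function.Exact (dmap k G f (LinearMap.id : N →ₗ[MonoidAlgebra k G] N))
      (dmap k G g LinearMap.id) :=
  exact_of_dt k G (rTensor_exact (RS k G N) (resHom_exact k G h) hg)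

theorem dmap_exact_right {f : M →ₗ[MonoidAlgebra k G] M'} {g : M' →ₗ[MonoidAlgebra k G] L}
    (h : Function.Exact f g) (hg : Function.Surjective g) :
    Function.Exact (dmap k G (LinearMap.id : N →ₗ[MonoidAlgebra k G] N) f)
      (dmap k G LinearMap.id g) :=
  exact_of_dt k G (lTensor_exact (RS k G N) (resHom_exact k G h) hg)

/-- lift equiv -/
noncomputable def liftEquiv (φ : RS k G M ≃ₗ[k] RS k G N)
    (h : ∀ g x, φ (actR M g x) = actR N g (φ x)) :
    M ≃ₗ[MonoidAlgebra k G] N :=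
  LinearEquiv.ofBijective (liftHom k G φ.toLinearMap h) φ.bijective

variable (M N L) in
/-- assoc -/
noncomputable def dassoc : DT k G (DT k G M N) L ≃ₗ[MonoidAlgebra k G] DT k G M (DT k G N L) :=
  liftEquiv k G ((dt k G (DT k G M N) L).symm ≪≫ₗ
    TensorProduct.congr (dt k G M N).symm (LinearEquiv.refl k _) ≪≫ₗ
    TensorProduct.assoc k _ _ _ ≪≫ₗ
    TensorProduct.congr (LinearEquiv.refl k _) (dt k G N L) ≪≫ₗ dt k G M (DT k G N L)) (by
    intro g x
    simp only [LinearEquiv.trans_apply, dt_act, dt_symm_act]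
    congr 1
    generalize (dt k G (DT k G M N) L).symm x = y
    induction y with
    | zero => simp
    | add a b ha hb => simp only [map_add, ha, hb]
    | tmul a b =>
      obtain ⟨a, rfl⟩ := (dt k G M N).surjective a
      simp only [TensorProduct.map_tmul, TensorProduct.congr_tmul, dt_symm_act,
        LinearEquiv.symm_apply_apply, LinearEquiv.refl_apply]
      induction a with
      | zero => simp
      | add a b ha hb => simp only [map_add, TensorProduct.add_tmul, ha, hb]
      | tmul a c =>
        simp only [TensorProduct.map_tmul, TensorProduct.assoc_tmul, TensorProduct.congr_tmul,
          LinearEquiv.refl_apply, dt_act])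

/-- the trivial module -/
abbrev Triv : Type := (Representation.trivial k G k).asModule

variable (M) in
/-- unit -/
noncomputable def dunit : DT k G M (Triv k G) ≃ₗ[MonoidAlgebra k G] M :=
  liftEquiv k G ((dt k G M (Triv k G)).symm ≪≫ₗ
    TensorProduct.congr (LinearEquiv.refl k _) (asEquiv k G (Representation.trivial k G k)).symm
      ≪≫ₗ TensorProduct.rid k _) (by
    intro g x
    simp only [LinearEquiv.trans_apply, dt_symm_act]
    generalize (dt k G M (Triv k G)).symm x = y
    induction y with
    | zero => simp
    | add a b ha hb => simp only [map_add, ha, hb]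
    | tmul a b =>
      obtain ⟨b, rfl⟩ := (asEquiv k G (Representation.trivial k G k)).surjective b
      simp only [TensorProduct.map_tmul, ← asEquiv_act, TensorProduct.congr_tmul,
        LinearEquiv.symm_apply_apply, LinearEquiv.refl_apply, TensorProduct.rid_tmul, map_smul]
      rfl)

theorem triv_finite : Module.Finite (MonoidAlgebra k G) (Triv k G) :=
  Module.Finite.of_restrictScalars_finite k (MonoidAlgebra k G) (Triv k G)

theorem lifting {P Z S Y : Type} [AddCommGroup P] [Module (MonoidAlgebra k G) P]
    [AddCommGroup Z] [Module (MonoidAlgebra k G) Z] [AddCommGroup S] [Module (MonoidAlgebra k G) S]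
    [AddCommGroup Y] [Module (MonoidAlgebra k G) Y] [Module.Projective (MonoidAlgebra k G) P]
    (p : P →ₗ[MonoidAlgebra k G] Z) (q : Y →ₗ[MonoidAlgebra k G] DT k G Z S)
    (hq : Function.Surjective q) :
    ∃ w : DT k G P S →ₗ[MonoidAlgebra k G] Y, ∀ x, q (w x) = dmap k G p LinearMap.id x := by
  let ρ := Representation.linHom (actR (k := k) (G := G) S)
    (actR (k := k) (G := G) Y)
  let τ := Representation.linHom (actR (k := k) (G := G) S)
    (actR (k := k) (G := G) (DT k G Z S))
  have inv : ∀ (g : G) (s : RS k G S), actR (k := k) S g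
      (actR (k := k) S g⁻¹ s) = s := by
    intro g s
    simp
  have inv' : ∀ (g : G) (s : RS k G S), actR (k := k) S g⁻¹
      (actR (k := k) S g s) = s := by
    intro g s
    simp
  let qs : ρ.asModule →ₗ[MonoidAlgebra k G] τ.asModule :=
    liftHom k G ((asEquiv k G τ).toLinearMap ∘ₗ LinearMap.llcomp k _ _ _ (resHom k G q) ∘ₗ
      (asEquiv k G ρ).symm.toLinearMap) (by
      intro g x
      obtain ⟨x, rfl⟩ := (asEquiv k G ρ).surjective x
      simp only [LinearMap.comp_apply, LinearEquiv.coe_coe, ← asEquiv_act,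
        LinearEquiv.symm_apply_apply]
      congr 1
      ext s
      simp only [ρ, τ, Representation.linHom_apply, LinearMap.comp_apply,
        LinearMap.llcomp_apply, resHom_act])
  let u : P →ₗ[MonoidAlgebra k G] τ.asModule :=
    liftHom k G ((asEquiv k G τ).toLinearMap ∘ₗ
      (TensorProduct.curry (dt k G Z S).toLinearMap) ∘ₗ (resHom k G p)) (by
      intro g x
      simp only [LinearMap.comp_apply, LinearEquiv.coe_coe, ← asEquiv_act]
      congr 1
      ext s
      simp only [τ, Representation.linHom_apply, LinearMap.comp_apply,
        TensorProduct.curry_apply, LinearEquiv.coe_coe, dt_act, TensorProduct.map_tmul, inv,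
        resHom_act])
  have hqs : Function.Surjective qs := by
    intro y
    obtain ⟨y, rfl⟩ := (asEquiv k G τ).surjective y
    obtain ⟨x, hx⟩ := Module.projective_lifting_property (resHom k G q) y hq
    exact ⟨asEquiv k G ρ x, congrArg (asEquiv k G τ) hx⟩
  obtain ⟨v, hv⟩ := Module.projective_lifting_property qs u hqs
  let w : DT k G P S →ₗ[MonoidAlgebra k G] Y :=
    liftHom k G (TensorProduct.lift ((asEquiv k G ρ).symm.toLinearMap ∘ₗ resHom k G v) ∘ₗ
      (dt k G P S).symm.toLinearMap) (by
      intro g x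
      simp only [LinearMap.comp_apply, LinearEquiv.coe_coe, dt_symm_act]
      generalize (dt k G P S).symm x = y
      induction y with
      | zero => simp
      | add a b ha hb => simp only [map_add, ha, hb]
      | tmul a b =>
        simp only [TensorProduct.map_tmul, TensorProduct.lift.tmul, LinearMap.comp_apply,
          LinearEquiv.coe_coe, resHom_act]
        generalize (resHom k G v) a = c
        obtain ⟨c, rfl⟩ := (asEquiv k G ρ).surjective c
        rw [← asEquiv_act]
        simp only [LinearEquiv.symm_apply_apply, ρ, Representation.linHom_apply,
          LinearMap.comp_apply, inv'])
  refine ⟨w, fun x => ?_⟩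
  obtain ⟨x, rfl⟩ := (dt k G P S).surjective x
  have key : (resHom k G q) ∘ₗ TensorProduct.lift ((asEquiv k G ρ).symm.toLinearMap ∘ₗ resHom k G v)
      = (dt k G Z S).toLinearMap ∘ₗ TensorProduct.map (resHom k G p) LinearMap.id := by
    ext a s
    have h1 : qs (v a) = u a := LinearMap.congr_fun hv a
    have h2 := congrArg (fun z => (asEquiv k G τ).symm z s) h1
    exact h2
  exact LinearMap.congr_fun key x

end api2

section chi
variable {A : Type} [Ring A] {χ : (X : Type) → [AddCommGroup X] → [Module A X] → ℕ}

theorem chi_subsingleton (hχ : IsSubadditive A χ) (W : Type) [AddCommGroup W] [Module A W]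
    [Subsingleton W] : χ W = 0 := by
  have hf : Module.Finite A W := inferInstance
  have h1 := hχ.2.1 W W hf hf
  have e : (W × W) ≃ₗ[A] W := LinearEquiv.ofBijective (LinearMap.fst A W W)
    ⟨fun a b _ => Subsingleton.elim _ _, fun a => ⟨(a, a), rfl⟩⟩
  have h2 := hχ.1 (W × W) W inferInstance hf e
  omega

theorem mem_of_equiv (hχ : IsSubadditive A χ) {Z Z' : Type} [AddCommGroup Z] [Module A Z]
    [AddCommGroup Z'] [Module A Z'] (e : Z ≃ₗ[A] Z') (h : MemAdloc A χ Z) : MemAdloc A χ Z' := by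
  have hZ := h.1
  have hZ' : Module.Finite A Z' := Module.Finite.equiv e
  refine ⟨hZ', ?_⟩
  intro X Y _ _ _ _ hX hY f g hf hfg hg
  rw [← hχ.1 Z Z' hZ hZ' e]
  refine h.2 X Y hX hY f (e.symm.toLinearMap ∘ₗ g) hf ?_ (e.symm.surjective.comp hg)
  intro y
  rw [← hfg y]
  simp

theorem mem_subsingleton (hχ : IsSubadditive A χ) (W : Type) [AddCommGroup W] [Module A W]
    [Subsingleton W] : MemAdloc A χ W := by
  refine ⟨inferInstance, ?_⟩
  intro X Y _ _ _ _ hX hY f g hf hfg hg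
  rw [chi_subsingleton hχ W, add_zero]
  exact hχ.1 X Y hX hY (LinearEquiv.ofBijective f
    ⟨hf, fun y => (hfg y).1 (Subsingleton.elim _ _)⟩)

theorem mem_ext [IsNoetherianRing A] {Z₁ Z Z₂ : Type} [AddCommGroup Z₁] [Module A Z₁]
    [AddCommGroup Z] [Module A Z] [AddCommGroup Z₂] [Module A Z₂]
    (hZ : Module.Finite A Z) (i : Z₁ →ₗ[A] Z) (p : Z →ₗ[A] Z₂) (hi : Function.Injective i)
    (hip : Function.Exact i p) (hp : Function.Surjective p)
    (h1 : MemAdloc A χ Z₁) (h2 : MemAdloc A χ Z₂) : MemAdloc A χ Z := by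
  refine ⟨hZ, ?_⟩
  intro X Y _ _ _ _ hX hY f g hf hfg hg
  have e1 := h2.2 Z₁ Z h1.1 hZ i p hi hip hp
  let K := LinearMap.ker (p ∘ₗ g)
  have hK : Module.Finite A K := inferInstance
  have e2 := h2.2 K Y hK hY K.subtype (p ∘ₗ g) K.injective_subtype
    (LinearMap.exact_subtype_ker_map _) (hp.comp hg)
  have hgK : ∀ y : K, g y ∈ LinearMap.range i := fun y => (hip (g y)).1 y.2
  let e := LinearEquiv.ofInjective i hi
  let g' : K →ₗ[A] Z₁ := e.symm.toLinearMap ∘ₗ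
    LinearMap.codRestrict (LinearMap.range i) (g ∘ₗ K.subtype) hgK
  have hg' : ∀ y : K, i (g' y) = g y := fun y =>
    congrArg Subtype.val (e.apply_symm_apply ⟨g y, hgK y⟩)
  have hgf : ∀ x, g (f x) = 0 := fun x => (hfg _).2 ⟨x, rfl⟩
  let f' : X →ₗ[A] K := LinearMap.codRestrict K f (fun x => by simp [K, hgf])
  have e3 := h1.2 X K hX hK f' g' (fun a b h => hf (congrArg Subtype.val h)) (by
    intro y
    constructor
    · intro h
      have : g y = 0 := by rw [← hg', h, map_zero]
      obtain ⟨x, hx⟩ := (hfg _).1 this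
      exact ⟨x, Subtype.ext hx⟩
    · rintro ⟨x, rfl⟩
      apply hi
      rw [hg', map_zero]
      exact hgf x) (by
    intro z
    obtain ⟨y, hy⟩ := hg (i z)
    have hm : y ∈ K := by
      simp only [K, LinearMap.mem_ker, LinearMap.comp_apply, hy]
      exact (hip _).2 ⟨z, rfl⟩
    exact ⟨⟨y, hm⟩, hi ((hg' _).trans hy)⟩)
  omega

theorem mem_of_lifting (hχ : IsSubadditive A χ) {K Q W : Type} [AddCommGroup K] [Module A K]
    [AddCommGroup Q] [Module A Q] [AddCommGroup W] [Module A W]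
    (hK : Module.Finite A K) (hQ : Module.Finite A Q) (hW : Module.Finite A W)
    (i : K →ₗ[A] Q) (p : Q →ₗ[A] W)
    (hip : Function.Exact i p) (hp : Function.Surjective p)
    (hadd : χ K + χ W = χ Q)
    (hl : ∀ (Y : Type) [AddCommGroup Y] [Module A Y] (q : Y →ₗ[A] W), Function.Surjective q →
      ∃ w : Q →ₗ[A] Y, ∀ x, q (w x) = p x) : MemAdloc A χ W := by
  refine ⟨hW, ?_⟩
  intro X Y _ _ _ _ hX hY f g hf hfg hg
  have le1 := hχ.2.2 X Y W hX hY hW f g hfg hg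
  obtain ⟨w, hw⟩ := hl Y g hg
  have hr : ∀ x : K, w (i x) ∈ LinearMap.range f := fun x => (hfg _).1 (by
    rw [hw]; exact (hip _).2 ⟨x, rfl⟩)
  let e := LinearEquiv.ofInjective f hf
  let r : K →ₗ[A] X := e.symm.toLinearMap ∘ₗ
    LinearMap.codRestrict (LinearMap.range f) (w ∘ₗ i) hr
  have hr' : ∀ x, f (r x) = w (i x) := fun x =>
    congrArg Subtype.val (e.apply_symm_apply ⟨w (i x), hr x⟩)
  have hgf : ∀ x, g (f x) = 0 := fun x => (hfg _).2 ⟨x, rfl⟩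
  have le2 := hχ.2.2 K (X × Q) Y hK inferInstance hY ((-r).prod i) (f.coprod w) (by
    rintro ⟨x, t⟩
    simp only [LinearMap.coprod_apply]
    constructor
    · intro h
      have : p t = 0 := by
        have := congrArg g h
        simpa [hgf, hw] using this
      obtain ⟨κ, rfl⟩ := (hip _).1 this
      refine ⟨κ, Prod.ext (hf ?_) rfl⟩
      rw [← hr'] at h
      change f (-(r κ)) = f x
      rw [map_neg]
      exact (eq_neg_of_add_eq_zero_left h).symm
    · rintro ⟨κ, hκ⟩
      obtain ⟨rfl, rfl⟩ := Prod.ext_iff.1 hκ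
      simp [hr']) (by
    intro y
    obtain ⟨t, ht⟩ := hp (g y)
    obtain ⟨x, hx⟩ := (hfg (y - w t)).1 (by rw [map_sub, hw, ht, sub_self])
    exact ⟨(x, t), by simp [hx]⟩)
  have := hχ.2.1 X Q hX hQ
  omega

end chi

section main
variable {k G : Type} [Field k] [Group G] [Finite G]
    {χ : (X : Type) → [AddCommGroup X] → [Module (MonoidAlgebra k G) X] → ℕ}

theorem noeth : IsNoetherianRing (MonoidAlgebra k G) :=
  have : Module.Finite k (MonoidAlgebra k G) := inferInstance
  IsNoetherianRing.of_finite k _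

theorem artin : IsArtinianRing (MonoidAlgebra k G) :=
  have : Module.Finite k (MonoidAlgebra k G) := inferInstance
  IsArtinianRing.of_finite k _

theorem mem_sum_iff (hχ : IsSubadditive (MonoidAlgebra k G) χ) {m : ℕ} (S : Fin m → Type)
    [∀ i, AddCommGroup (S i)] [∀ i, Module (MonoidAlgebra k G) (S i)]
    (hS : ∀ i, Module.Finite (MonoidAlgebra k G) (S i))
    (Z : Type) [AddCommGroup Z] [Module (MonoidAlgebra k G) Z] :
    MemAdloc (MonoidAlgebra k G) (fun X _ _ => ∑ i, χ (DT k G X (S i))) Z ↔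
    Module.Finite (MonoidAlgebra k G) Z ∧
      ∀ i, MemAdloc (MonoidAlgebra k G) χ (DT k G Z (S i)) := by
  have := noeth (k := k) (G := G)
  constructor
  · intro h
    have hZ := h.1
    refine ⟨hZ, ?_⟩
    obtain ⟨n, p, hp⟩ := Module.Finite.exists_fin' (MonoidAlgebra k G) Z
    let K := LinearMap.ker p
    have hK : Module.Finite (MonoidAlgebra k G) K := inferInstance
    have hP : Module.Finite (MonoidAlgebra k G) (Fin n → MonoidAlgebra k G) := inferInstance
    have hex : Function.Exact K.subtype p := LinearMap.exact_subtype_ker_map p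
    have hadd := h.2 K (Fin n → MonoidAlgebra k G) hK hP K.subtype p K.injective_subtype hex hp
    rw [← Finset.sum_add_distrib] at hadd
    have hle : ∀ i ∈ Finset.univ, χ (DT k G (Fin n → MonoidAlgebra k G) (S i)) ≤
        χ (DT k G K (S i)) + χ (DT k G Z (S i)) := fun i _ =>
      hχ.2.2 _ _ _ (dfinite hK (hS i)) (dfinite hP (hS i)) (dfinite hZ (hS i))
        (dmap k G K.subtype LinearMap.id) (dmap k G p LinearMap.id)
        (dmap_exact_left k G hex hp) (dmap_surj k G hp Function.surjective_id)
    have heq := (Finset.sum_eq_sum_iff_of_le hle).1 hadd.symm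
    intro i
    exact mem_of_lifting hχ (dfinite hK (hS i)) (dfinite hP (hS i)) (dfinite hZ (hS i))
        (dmap k G K.subtype LinearMap.id) (dmap k G p LinearMap.id)
        (dmap_exact_left k G hex hp) (dmap_surj k G hp Function.surjective_id)
        (heq i (Finset.mem_univ i)).symm (fun Y _ _ q hq => lifting k G p q hq)
  · rintro ⟨hZ, h⟩
    refine ⟨hZ, ?_⟩
    intro X Y _ _ _ _ hX hY f g hf hfg hg
    rw [← Finset.sum_add_distrib]
    refine Finset.sum_congr rfl fun i _ => ?_
    exact (h i).2 _ _ (dfinite hX (hS i)) (dfinite hY (hS i)) (dmap k G f LinearMap.id)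
      (dmap k G g LinearMap.id) (dmap_inj k G hf Function.injective_id)
      (dmap_exact_left k G hfg hg) (dmap_surj k G hg Function.surjective_id)

theorem mem_all (hχ : IsSubadditive (MonoidAlgebra k G) χ) {m : ℕ} (S : Fin m → Type)
    [∀ i, AddCommGroup (S i)] [∀ i, Module (MonoidAlgebra k G) (S i)]
    (hS : IsCompleteSetOfSimples k G S)
    (Z : Type) [AddCommGroup Z] [Module (MonoidAlgebra k G) Z]
    (hZ : Module.Finite (MonoidAlgebra k G) Z)
    (h : ∀ i, MemAdloc (MonoidAlgebra k G) χ (DT k G Z (S i)))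
    (N : Type) [AddCommGroup N] [Module (MonoidAlgebra k G) N]
    (hN : Module.Finite (MonoidAlgebra k G) N) :
    MemAdloc (MonoidAlgebra k G) χ (DT k G Z N) := by
  have := noeth (k := k) (G := G)
  have := artin (k := k) (G := G)
  have hl : IsFiniteLength (MonoidAlgebra k G) N :=
    isFiniteLength_iff_isNoetherian_isArtinian.2 ⟨inferInstance, inferInstance⟩
  clear hN
  induction hl with
  | @of_subsingleton M _ _ _ =>
    have : Subsingleton (DT k G Z M) := by
      refine ⟨fun a b => ?_⟩
      obtain ⟨a, rfl⟩ := (dt k G Z M).surjective a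
      obtain ⟨b, rfl⟩ := (dt k G Z M).surjective b
      have : Subsingleton (RS k G M) := ‹Subsingleton M›
      rw [Subsingleton.elim a b]
    exact mem_subsingleton hχ _
  | @of_simple_quotient M _ _ N' hs hN' ih =>
    obtain ⟨i, ⟨e⟩⟩ := hS.2.2 (M ⧸ N') _ _ hs
    have hM : Module.Finite (MonoidAlgebra k G) M := by
      have := (isFiniteLength_iff_isNoetherian_isArtinian.1
        (IsFiniteLength.of_simple_quotient hN')).1
      infer_instance
    let p : M →ₗ[MonoidAlgebra k G] S i := e.toLinearMap ∘ₗ N'.mkQ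
    have hp : Function.Surjective p := e.surjective.comp N'.mkQ_surjective
    have hex : Function.Exact N'.subtype p := by
      intro y
      simp [p]
    exact mem_ext (dfinite hZ hM) (dmap k G LinearMap.id N'.subtype) (dmap k G LinearMap.id p)
      (dmap_inj k G Function.injective_id N'.injective_subtype)
      (dmap_exact_right k G hex hp) (dmap_surj k G Function.surjective_id hp) ih (h i)

theorem main_aux
    (hχ : IsSubadditive (MonoidAlgebra k G) χ)
    (m : ℕ) (S : Fin m → Type)
    [∀ i, AddCommGroup (S i)] [∀ i, Module (MonoidAlgebra k G) (S i)]
    (hS : IsCompleteSetOfSimples k G S) :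
    (∀ (M N : Type) [AddCommGroup M] [Module (MonoidAlgebra k G) M]
      [AddCommGroup N] [Module (MonoidAlgebra k G) N],
      MemAdloc (MonoidAlgebra k G) (fun X _ _ => ∑ i, χ (DT k G X (S i))) M →
      Module.Finite (MonoidAlgebra k G) N →
      MemAdloc (MonoidAlgebra k G) (fun X _ _ => ∑ i, χ (DT k G X (S i))) (DT k G M N)) ∧
    (∀ (X : Type) [AddCommGroup X] [Module (MonoidAlgebra k G) X],
      MemAdloc (MonoidAlgebra k G) (fun X _ _ => ∑ i, χ (DT k G X (S i))) X →
      MemAdloc (MonoidAlgebra k G) χ X) ∧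
    (∀ χ'' : (X : Type) → [AddCommGroup X] → [Module (MonoidAlgebra k G) X] → ℕ,
      IsSubadditive (MonoidAlgebra k G) χ'' →
      (∀ (M N : Type) [AddCommGroup M] [Module (MonoidAlgebra k G) M]
      [AddCommGroup N] [Module (MonoidAlgebra k G) N],
      MemAdloc (MonoidAlgebra k G) χ'' M →
      Module.Finite (MonoidAlgebra k G) N →
      MemAdloc (MonoidAlgebra k G) χ'' (DT k G M N)) →
      (∀ (X : Type) [AddCommGroup X] [Module (MonoidAlgebra k G) X],
        MemAdloc (MonoidAlgebra k G) χ'' X → MemAdloc (MonoidAlgebra k G) χ X) →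
      (∀ (X : Type) [AddCommGroup X] [Module (MonoidAlgebra k G) X],
        MemAdloc (MonoidAlgebra k G) χ'' X →
        MemAdloc (MonoidAlgebra k G) (fun X _ _ => ∑ i, χ (DT k G X (S i))) X)) := by
  have hfin : ∀ i, Module.Finite (MonoidAlgebra k G) (S i) := fun i => by
    have := hS.1 i
    infer_instance
  refine ⟨?_, ?_, ?_⟩
  · intro M N _ _ _ _ hM hN
    obtain ⟨hMf, h⟩ := (mem_sum_iff hχ S hfin M).1 hM
    refine (mem_sum_iff hχ S hfin _).2 ⟨dfinite hMf hN, fun i => ?_⟩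
    exact mem_of_equiv hχ (dassoc k G M N (S i)).symm
      (mem_all hχ S hS M hMf h _ (dfinite hN (hfin i)))
  · intro X _ _ hX
    obtain ⟨hXf, h⟩ := (mem_sum_iff hχ S hfin X).1 hX
    exact mem_of_equiv hχ (dunit k G X) (mem_all hχ S hS X hXf h _ (triv_finite k G))
  · intro χ'' _ ht hsub X _ _ hX
    exact (mem_sum_iff hχ S hfin X).2 ⟨hX.1, fun i => hsub _ (ht X (S i) hX (hfin i))⟩

end main

/-- With `χ'(X) := Σᵢ χ(X ⊗ Sᵢ)` as above, `χ'` is tensor closed,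
`Adloc(χ') ⊆ Adloc(χ)`, and `χ'` is minimal with these properties: any tensor closed
subadditive `χ''` with `Adloc(χ'') ⊆ Adloc(χ)` satisfies `Adloc(χ'') ⊆ Adloc(χ')`. -/
theorem statement9 (k G : Type) [Field k] [Group G] [Finite G]
    (χ : (X : Type) → [AddCommGroup X] → [Module (MonoidAlgebra k G) X] → ℕ)
    (hχ : IsSubadditive (MonoidAlgebra k G) χ)
    (m : ℕ) (S : Fin m → Type)
    [∀ i, AddCommGroup (S i)] [∀ i, Module (MonoidAlgebra k G) (S i)]
    (hS : IsCompleteSetOfSimples k G S) :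
    TensorClosed k G (fun X _ _ => ∑ i, χ (dtensor k G X (S i))) ∧
    (∀ (X : Type) [AddCommGroup X] [Module (MonoidAlgebra k G) X],
      MemAdloc (MonoidAlgebra k G) (fun X _ _ => ∑ i, χ (dtensor k G X (S i))) X →
      MemAdloc (MonoidAlgebra k G) χ X) ∧
    (∀ χ'' : (X : Type) → [AddCommGroup X] → [Module (MonoidAlgebra k G) X] → ℕ,
      IsSubadditive (MonoidAlgebra k G) χ'' → TensorClosed k G χ'' →
      (∀ (X : Type) [AddCommGroup X] [Module (MonoidAlgebra k G) X],
        MemAdloc (MonoidAlgebra k G) χ'' X → MemAdloc (MonoidAlgebra k G) χ X) →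
      (∀ (X : Type) [AddCommGroup X] [Module (MonoidAlgebra k G) X],
        MemAdloc (MonoidAlgebra k G) χ'' X →
        MemAdloc (MonoidAlgebra k G) (fun X _ _ => ∑ i, χ (dtensor k G X (S i))) X)) := by
  exact main_aux hχ m S hS
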